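/- arXiv:cond-mat/0112045 — 2 statements merged into one kernel-verified Lean document; each statement's English description precedes it below -/
import Mathlib

section
/- In the CreditRisk⁺ model, for every real z with 0 < z < ρ_g the probability generating function g_α(z) = E_α[z^L] is finite and satisfies g_α(z) = exp(S₀ (Σ_{i=1}^n r_{0,i} z^{ν_i} − 1)) · Π_{j=1}^k (1 + β_j − β_j Σ_{i=1}^n r_{j,i} z^{ν_i})^{−α_j}. -/
open MeasureTheory ProbabilityTheory Real

noncomputable section

/-- The gamma measure is sigma-finite (needed to form product measures). -/
instance gammaMeasure.instSigmaFinite (a r : ℝ) :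
    SigmaFinite (gammaMeasure a r) := by
  unfold ProbabilityTheory.gammaMeasure ProbabilityTheory.gammaPDF
  infer_instance

/-- Conditional Poisson intensity `R_i(s) = r_{0,i} S_0 + sum_j r_{j,i} s_j`. -/
def crpR {n k : ℕ} (S0 : ℝ) (r0 : Fin n → ℝ) (r : Fin k → Fin n → ℝ)
    (s : Fin k → ℝ) (i : Fin n) : ℝ :=
  r0 i * S0 + ∑ j, r j i * s j

/-- The CreditRisk⁺ measure `P_α` on `(Fin k → ℝ) × (Fin n → ℕ)`: the product of the
Gamma factor measures (shape `α j`, scale `β j`, i.e. rate `(β j)⁻¹`), composed with the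
kernel sending the factor vector `s` to the product of Poisson measures with means `R_i(s)`,
recorded jointly with `s`. -/
def crpMeasure {n k : ℕ} (S0 : ℝ) (r0 : Fin n → ℝ) (r : Fin k → Fin n → ℝ)
    (α β : Fin k → ℝ) : Measure ((Fin k → ℝ) × (Fin n → ℕ)) :=
  (Measure.pi fun j => gammaMeasure (α j) (β j)⁻¹).bind fun s =>
    (Measure.pi fun i => poissonMeasure (crpR S0 r0 r s i).toNNReal).map fun x => (s, x)

/-- Portfolio loss `L = ∑ ν_i N_i`. -/
def crpLoss {n k : ℕ} (ν : Fin n → ℕ) (x : (Fin k → ℝ) × (Fin n → ℕ)) : ℕ :=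
  ∑ i, ν i * x.2 i

/-- Value-at-risk of the ℕ-valued loss `L` at level `δ`: the smallest `l` with
`P[L ≤ l] ≥ δ` (a natural number since `L` is ℕ-valued). -/
def crpVaR {n k : ℕ} (P : Measure ((Fin k → ℝ) × (Fin n → ℕ)))
    (ν : Fin n → ℕ) (δ : ℝ) : ℕ :=
  sInf {l : ℕ | ENNReal.ofReal δ ≤ P {x | crpLoss ν x ≤ l}}

/-- `ρ_g`, the radius of convergence of the probability generating function. -/
def crpRadius {n k : ℕ} (ν : Fin n → ℕ) (r : Fin k → Fin n → ℝ) (β : Fin k → ℝ) : ℝ :=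
  sSup {z : ℝ | 0 < z ∧ ∀ j, ∑ i, r j i * z ^ ν i < 1 + (β j)⁻¹}

/-- The generating function of the Poisson distribution with mean `c` is `exp (c * (w - 1))`. -/
lemma poissonMeasure_pgf (c : NNReal) {w : ℝ} (hw : 0 ≤ w) :
    Integrable (fun m : ℕ => w ^ m) (poissonMeasure c) ∧
      ∫ m : ℕ, w ^ m ∂(poissonMeasure c) = Real.exp (c * (w - 1)) := by
  have hterm : ∀ m : ℕ, Real.exp (-c) * (c : ℝ) ^ m / (m.factorial : ℝ) * w ^ m =
      Real.exp (-c) * ((c * w) ^ m / (m.factorial : ℝ)) := fun m => by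
    rw [mul_pow]; ring
  have hsum : HasSum (fun m : ℕ => Real.exp (-c) * (c : ℝ) ^ m / (m.factorial : ℝ) * w ^ m)
      (Real.exp (c * (w - 1))) := by
    simp_rw [hterm]
    have h := (NormedSpace.expSeries_div_hasSum_exp ((c : ℝ) * w)).mul_left (Real.exp (-c))
    rw [← Real.exp_eq_exp_ℝ, ← Real.exp_add] at h
    rwa [show -(c : ℝ) + c * w = c * (w - 1) by ring] at h
  refine ⟨?_, ?_⟩
  · rw [integrable_poissonMeasure_iff]
    convert hsum.summable using 3 with m
    exact Real.norm_of_nonneg (pow_nonneg hw m)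
  · rw [integral_poissonMeasure]
    exact hsum.tsum_eq

/-- The exponential tilt of a Gamma density is proportional to a Gamma density. -/
lemma gammaPDFReal_mul_exp {a r t : ℝ} (hr : 0 < r) (ht : t < r) (x : ℝ) :
    gammaPDFReal a r x * Real.exp (t * x) =
      (1 - r⁻¹ * t) ^ (-a) * gammaPDFReal a (r - t) x := by
  have hrt : 0 < r - t := sub_pos.2 ht
  have hfac : 1 - r⁻¹ * t = (r - t) / r := by field_simp
  unfold gammaPDFReal
  split_ifs with hx
  · rw [hfac, Real.rpow_neg (by positivity), Real.div_rpow hrt.le hr.le,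
      show -((r - t) * x) = -(r * x) + t * x by ring, Real.exp_add]
    have h₁ := (Real.rpow_pos_of_pos hrt a).ne'
    field_simp
  · simp

lemma integrable_gammaPDFReal {a r : ℝ} (ha : 0 < a) (hr : 0 < r) :
    Integrable (gammaPDFReal a r) := by
  refine ⟨(measurable_gammaPDFReal a r).aestronglyMeasurable, ?_⟩
  rw [hasFiniteIntegral_iff_ofReal (ae_of_all _ (gammaPDFReal_nonneg ha hr))]
  exact (lintegral_gammaPDF_eq_one ha hr).trans_lt ENNReal.one_lt_top

lemma integral_gammaPDFReal {a r : ℝ} (ha : 0 < a) (hr : 0 < r) :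
    ∫ x, gammaPDFReal a r x = 1 := by
  rw [integral_eq_lintegral_of_nonneg_ae (ae_of_all _ (gammaPDFReal_nonneg ha hr))
    (measurable_gammaPDFReal a r).aestronglyMeasurable]
  exact (congrArg ENNReal.toReal (lintegral_gammaPDF_eq_one ha hr)).trans ENNReal.toReal_one

/-- The moment generating function of the Gamma distribution with shape `a` and rate `r` is
`(1 - t / r) ^ (-a)` at every `t < r`. -/
lemma gammaMeasure_mgf {a r t : ℝ} (ha : 0 < a) (hr : 0 < r) (ht : t < r) :
    Integrable (fun x => Real.exp (t * x)) (gammaMeasure a r) ∧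
      ∫ x, Real.exp (t * x) ∂(gammaMeasure a r) = (1 - r⁻¹ * t) ^ (-a) := by
  have hrt : 0 < r - t := sub_pos.2 ht
  have hmeas : Measurable (gammaPDF a r) := (measurable_gammaPDFReal a r).ennreal_ofReal
  have hfin : ∀ᵐ x : ℝ, gammaPDF a r x < ⊤ := ae_of_all _ fun _ => ENNReal.ofReal_lt_top
  have hdens : ∀ x, (gammaPDF a r x).toReal • Real.exp (t * x) =
      (1 - r⁻¹ * t) ^ (-a) * gammaPDFReal a (r - t) x := fun x => by
    rw [gammaPDF, ENNReal.toReal_ofReal (gammaPDFReal_nonneg ha hr x), smul_eq_mul,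
      gammaPDFReal_mul_exp hr ht]
  refine ⟨?_, ?_⟩
  · rw [gammaMeasure, integrable_withDensity_iff_integrable_smul' hmeas hfin]
    simp_rw [hdens]
    exact (integrable_gammaPDFReal ha hrt).const_mul _
  · rw [gammaMeasure, integral_withDensity_eq_integral_toReal_smul hmeas hfin]
    simp_rw [hdens]
    rw [integral_const_mul, integral_gammaPDFReal ha hrt, mul_one]

lemma ae_nonneg_gammaMeasure (a r : ℝ) : ∀ᵐ x ∂(gammaMeasure a r), 0 ≤ x := by
  have hmeas : Measurable (gammaPDF a r) := (measurable_gammaPDFReal a r).ennreal_ofReal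
  rw [gammaMeasure, ae_withDensity_iff hmeas]
  refine ae_of_all _ fun x hx => ?_
  by_contra! hneg
  exact hx (gammaPDF_of_neg hneg)

/-- A product of Poisson distributions depends measurably on its means. -/
lemma measurable_pi_poissonMeasure {ι X : Type*} [Fintype ι] [MeasurableSpace X]
    {c : X → ι → NNReal} (hc : ∀ i, Measurable fun s => c s i) :
    Measurable fun s => Measure.pi fun i => poissonMeasure (c s i) := by
  refine Measure.measurable_of_measurable_coe _ fun A _ => ?_
  have hA : ∀ s, (Measure.pi fun i => poissonMeasure (c s i)) A =
      ∑' x : A, ∏ i, ENNReal.ofReal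
        (Real.exp (-c s i) * (c s i : ℝ) ^ (x : ι → ℕ) i / (((x : ι → ℕ) i).factorial : ℝ)) :=
    fun s => by
      rw [← Measure.tsum_indicator_apply_singleton _ A (Set.to_countable A).measurableSet,
        ← tsum_subtype]
      simp_rw [Measure.pi_singleton, poissonMeasure_singleton]
  simp_rw [hA]
  refine Measurable.tsum fun x => Finset.measurable_prod _ fun i _ => ?_
  have := hc i
  fun_prop

/-- The Markov kernel sending the factors to the conditional law of the counts. -/
def crpKernel {n k : ℕ} (S0 : ℝ) (r0 : Fin n → ℝ) (r : Fin k → Fin n → ℝ) :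
    Kernel (Fin k → ℝ) (Fin n → ℕ) where
  toFun s := Measure.pi fun i => poissonMeasure (crpR S0 r0 r s i).toNNReal
  measurable' := measurable_pi_poissonMeasure fun i => by
    unfold crpR
    fun_prop

instance {n k : ℕ} (S0 : ℝ) (r0 : Fin n → ℝ) (r : Fin k → Fin n → ℝ) :
    IsMarkovKernel (crpKernel S0 r0 r) :=
  ⟨fun s => inferInstanceAs (IsProbabilityMeasure
    (Measure.pi fun i => poissonMeasure (crpR S0 r0 r s i).toNNReal))⟩

lemma crpMeasure_eq_compProd {n k : ℕ} (S0 : ℝ) (r0 : Fin n → ℝ) (r : Fin k → Fin n → ℝ)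
    (α β : Fin k → ℝ) :
    crpMeasure S0 r0 r α β =
      (Measure.pi fun j => gammaMeasure (α j) (β j)⁻¹).compProd (crpKernel S0 r0 r) := by
  rw [Measure.compProd_eq_comp_prod, crpMeasure]
  congr 1
  ext1 s
  rw [Kernel.prod_apply, Kernel.id_apply, Measure.dirac_prod]
  rfl

/-- The conditional generating function of the loss given nonnegative factors. -/
lemma crpKernel_pgf {n k : ℕ} (ν : Fin n → ℕ) {S0 : ℝ} (hS0 : 0 ≤ S0)
    {r0 : Fin n → ℝ} {r : Fin k → Fin n → ℝ} (hr0 : ∀ i, 0 ≤ r0 i) (hr : ∀ j i, 0 ≤ r j i)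
    (hr0sum : ∑ i, r0 i = 1) (hrsum : ∀ j, ∑ i, r j i = 1)
    {z : ℝ} (hz : 0 ≤ z) {s : Fin k → ℝ} (hs : ∀ j, 0 ≤ s j) :
    Integrable (fun x => z ^ crpLoss ν (s, x)) (crpKernel S0 r0 r s) ∧
      ∫ x, z ^ crpLoss ν (s, x) ∂(crpKernel S0 r0 r s) =
        Real.exp (S0 * (∑ i, r0 i * z ^ ν i - 1)) *
          ∏ j, Real.exp ((∑ i, r j i * z ^ ν i - 1) * s j) := by
  have hpow : (fun x => z ^ crpLoss ν (s, x)) = fun x : Fin n → ℕ => ∏ i, (z ^ ν i) ^ x i := by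
    ext x
    simp only [crpLoss, ← pow_mul, Finset.prod_pow_eq_pow_sum]
  have hR : ∀ i, 0 ≤ crpR S0 r0 r s i := fun i =>
    add_nonneg (mul_nonneg (hr0 i) hS0) (Finset.sum_nonneg fun j _ => mul_nonneg (hr j i) (hs j))
  have hpgf := fun i =>
    poissonMeasure_pgf (crpR S0 r0 r s i).toNNReal (pow_nonneg hz (ν i))
  rw [hpow]
  refine ⟨Integrable.fintype_prod fun i => (hpgf i).1, ?_⟩
  have hint : ∫ x : Fin n → ℕ, ∏ i, (z ^ ν i) ^ x i ∂(crpKernel S0 r0 r s) =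
      ∏ i, ∫ m : ℕ, (z ^ ν i) ^ m ∂(poissonMeasure (crpR S0 r0 r s i).toNNReal) :=
    integral_fintype_prod_eq_prod (fun i (m : ℕ) => (z ^ ν i) ^ m)
  rw [hint]
  simp_rw [fun i => (hpgf i).2, fun i => Real.coe_toNNReal _ (hR i)]
  rw [← Real.exp_sum, ← Real.exp_sum, ← Real.exp_add]
  congr 1
  have h₀ : ∑ i, r0 i * z ^ ν i - 1 = ∑ i, r0 i * (z ^ ν i - 1) := by
    simp_rw [mul_sub, mul_one, Finset.sum_sub_distrib, hr0sum]
  have h₁ : ∀ j, ∑ i, r j i * z ^ ν i - 1 = ∑ i, r j i * (z ^ ν i - 1) := fun j => by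
    simp_rw [mul_sub, mul_one, Finset.sum_sub_distrib, hrsum]
  simp_rw [h₀, h₁, crpR, add_mul, Finset.sum_add_distrib, Finset.mul_sum, Finset.sum_mul]
  rw [Finset.sum_comm (s := Finset.univ (α := Fin k))]
  congr 1
  · exact Finset.sum_congr rfl fun i _ => by ring
  · exact Finset.sum_congr rfl fun i _ => Finset.sum_congr rfl fun j _ => by ring

lemma sum_lt_of_lt_crpRadius {n k : ℕ} {ν : Fin n → ℕ} {r : Fin k → Fin n → ℝ}
    (hr : ∀ j i, 0 ≤ r j i) {β : Fin k → ℝ} {z : ℝ} (hz0 : 0 < z) (hz : z < crpRadius ν r β)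
    (j : Fin k) : ∑ i, r j i * z ^ ν i < 1 + (β j)⁻¹ := by
  have hne : {z : ℝ | 0 < z ∧ ∀ j, ∑ i, r j i * z ^ ν i < 1 + (β j)⁻¹}.Nonempty := by
    by_contra hempty
    rw [crpRadius, Set.not_nonempty_iff_eq_empty.1 hempty, Real.sSup_empty] at hz
    exact lt_asymm hz0 hz
  obtain ⟨w, ⟨-, hw⟩, hzw⟩ := exists_lt_of_lt_csSup hne hz
  refine lt_of_le_of_lt (Finset.sum_le_sum fun i _ => ?_) (hw j)
  exact mul_le_mul_of_nonneg_left (pow_le_pow_left₀ hz0.le hzw.le _) (hr j i)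

/-- for `0 < z < ρ_g`, the pgf `g_α(z) = E_α[z^L]` is finite and equals
`exp (S₀ (∑_i r_{0,i} z^{ν_i} − 1)) · ∏_j (1 + β_j − β_j ∑_i r_{j,i} z^{ν_i})^{−α_j}`. -/
theorem crp_pgf_formula {n k : ℕ} (hn : 0 < n) (hk : 0 < k)
    (ν : Fin n → ℕ) (hν : ∀ i, 0 < ν i)
    (S0 : ℝ) (hS0 : 0 ≤ S0)
    (r0 : Fin n → ℝ) (r : Fin k → Fin n → ℝ)
    (hr0 : ∀ i, 0 ≤ r0 i) (hr : ∀ j i, 0 ≤ r j i)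
    (hr0sum : ∑ i, r0 i = 1) (hrsum : ∀ j, ∑ i, r j i = 1)
    (hrpos : ∀ i, 0 < ∑ j, r j i)
    (α β : Fin k → ℝ) (hα : ∀ j, 0 < α j) (hβ : ∀ j, 0 < β j)
    (z : ℝ) (hz0 : 0 < z) (hzρ : z < crpRadius ν r β) :
    Integrable (fun x => z ^ crpLoss ν x) (crpMeasure S0 r0 r α β) ∧
    ∫ x, z ^ crpLoss ν x ∂(crpMeasure S0 r0 r α β)
      = Real.exp (S0 * (∑ i, r0 i * z ^ ν i - 1)) *
        ∏ j, (1 + β j - β j * ∑ i, r j i * z ^ ν i) ^ (-(α j)) := by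
  have hβinv := fun j => inv_pos.2 (hβ j)
  have hmgf := fun j => gammaMeasure_mgf (hα j) (hβinv j)
    (show ∑ i, r j i * z ^ ν i - 1 < (β j)⁻¹ by
      linarith [sum_lt_of_lt_crpRadius hr hz0 hzρ j])
  have hcond : ∀ᵐ s ∂(Measure.pi fun j => gammaMeasure (α j) (β j)⁻¹), ∀ j, 0 ≤ s j :=
    Filter.eventually_all.2 fun j =>
      Measure.tendsto_eval_ae_ae.eventually (ae_nonneg_gammaMeasure (α j) (β j)⁻¹)
  have hpgf := hcond.mono fun s hs =>
    crpKernel_pgf ν hS0 hr0 hr hr0sum hrsum hz0.le hs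
  have hmeas : Measurable fun x : (Fin k → ℝ) × (Fin n → ℕ) => z ^ crpLoss ν x :=
    (measurable_of_countable fun y : Fin n → ℕ => z ^ ∑ i, ν i * y i).comp measurable_snd
  have hint : Integrable (fun x => z ^ crpLoss ν x) (crpMeasure S0 r0 r α β) := by
    rw [crpMeasure_eq_compProd, Measure.integrable_compProd_iff hmeas.aestronglyMeasurable]
    refine ⟨hpgf.mono fun s hs => hs.1, ?_⟩
    simp_rw [fun x => Real.norm_of_nonneg (pow_nonneg hz0.le (crpLoss ν x))]
    rw [integrable_congr (hpgf.mono fun s hs => hs.2)]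
    exact (Integrable.fintype_prod fun j => (hmgf j).1).const_mul _
  refine ⟨hint, ?_⟩
  rw [crpMeasure_eq_compProd] at hint ⊢
  rw [Measure.integral_compProd hint, integral_congr_ae (hpgf.mono fun s hs => hs.2),
    integral_const_mul, integral_fintype_prod_eq_prod
      (fun j y => Real.exp ((∑ i, r j i * z ^ ν i - 1) * y))]
  congr 1
  refine Finset.prod_congr rfl fun j _ => ?_
  rw [(hmgf j).2, inv_inv]
  congr 1
  ring
end
end

section
/- (Corollary 3.) In the CreditRisk⁺ model, fix a confidence level δ ∈ (0,1) and let q_δ(L) be the value-at-risk of L under P_α. Then for every i = 1,…,n the Expected Shortfall contribution satisfies E_α[N_i | L ≥ q_δ(L)] = (S₀ r_{0,i} P_α[L ≥ q_δ(L) − ν_i] + Σ_{j=1}^k α_j β_j r_{j,i} P_{α(j)}[L ≥ q_δ(L) − ν_i]) / P_α[L ≥ q_δ(L)], where the event {L ≥ q_δ(L) − ν_i} is all of the sample space when q_δ(L) ≤ ν_i. -/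
open MeasureTheory ProbabilityTheory Real

noncomputable section

open scoped NNReal ENNReal

/-- Reweighting one coordinate of a product measure by a density whose reweighted marginal is
`c • μ'` replaces that marginal by `μ'`, up to the factor `c`. -/
lemma withDensity_pi_eval {ι X : Type*} [Fintype ι] [DecidableEq ι] [MeasurableSpace X]
    (μ : ι → Measure X) [∀ i, SigmaFinite (μ i)] (i : ι) (μ' : Measure X) [IsFiniteMeasure μ']
    {h : X → ℝ≥0∞} (hh : Measurable h) (c : ℝ≥0) (hμ' : (μ i).withDensity h = c • μ') :
    (Measure.pi μ).withDensity (fun x => h (x i)) = c • Measure.pi (Function.update μ i μ') := by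
  have update_sigmaFinite (ρ : Measure X) [IsFiniteMeasure ρ] (j : ι) :
      SigmaFinite (Function.update μ i ρ j) := by
    by_cases hj : j = i
    · subst hj; rw [Function.update_self]; infer_instance
    · rw [Function.update_of_ne hj]; infer_instance
  have := update_sigmaFinite μ'
  have := update_sigmaFinite (c • μ')
  have prod_update (ρ : Measure X) (s : ι → Set X) :
      ∏ j, Function.update μ i ρ j (s j) = ρ (s i) * ∏ j ∈ Finset.univ.erase i, μ j (s j) := by
    rw [← Finset.mul_prod_erase _ _ (Finset.mem_univ i), Function.update_self]
    congr 1
    refine Finset.prod_congr rfl fun j hj => ?_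
    rw [Function.update_of_ne (Finset.ne_of_mem_erase hj)]
  trans Measure.pi (Function.update μ i (c • μ'))
  · refine (Measure.pi_eq fun s hs => ?_).symm
    rw [prod_update, withDensity_apply _ (.univ_pi hs), Measure.restrict_pi_pi,
      ← lintegral_map (f := h) (g := fun x : ι → X => x i) hh (measurable_pi_apply i)]
    have := Measure.pi_map_eval (μ := fun j => (μ j).restrict (s j)) i
    rw [show (fun x : ι → X => x i) = Function.eval i from rfl, this, lintegral_smul_measure,
      ← withDensity_apply _ (hs i), hμ', smul_eq_mul, mul_comm]
    simp
  · refine Measure.pi_eq fun s hs => ?_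
    rw [prod_update, Measure.smul_apply, Measure.pi_pi, prod_update, Measure.smul_apply,
      smul_mul_assoc]

/-- Size-biasing a Poisson distribution amounts to adding one. -/
lemma poissonMeasure_withDensity_cast (l : ℝ≥0) :
    (poissonMeasure l).withDensity (fun m => (m : ℝ≥0∞)) = l • (poissonMeasure l).map (· + 1) := by
  refine Measure.ext_of_singleton fun m => ?_
  rw [withDensity_apply _ (measurableSet_singleton m), lintegral_singleton, Measure.smul_apply,
    Measure.map_apply (by fun_prop) (measurableSet_singleton m), poissonMeasure_singleton]
  cases m with
  | zero => simp [Set.preimage]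
  | succ m =>
    have : (fun x : ℕ => x + 1) ⁻¹' {m + 1} = {m} := by ext; simp
    rw [this, poissonMeasure_singleton, ENNReal.smul_def, smul_eq_mul, ← ENNReal.ofReal_natCast,
      ← ENNReal.ofReal_coe_nnreal, ← ENNReal.ofReal_mul (by positivity),
      ← ENNReal.ofReal_mul (by positivity), Nat.factorial_succ]
    congr 1
    push_cast
    field_simp
    rw [pow_succ']

lemma measurable_gammaPDF (a b : ℝ) : Measurable (gammaPDF a b) :=
  (measurable_gammaPDFReal a b).ennreal_ofReal

/-- Size-biasing a Gamma distribution increases its shape parameter by one. -/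
lemma gammaMeasure_withDensity_ofReal {a b : ℝ} (ha : 0 < a) (hb : 0 < b) :
    (gammaMeasure a b⁻¹).withDensity ENNReal.ofReal =
      (a * b).toNNReal • gammaMeasure (a + 1) b⁻¹ := by
  rw [gammaMeasure, gammaMeasure, ENNReal.smul_def,
    ← withDensity_smul _ (measurable_gammaPDF _ _),
    ← withDensity_mul _ (measurable_gammaPDF _ _) ENNReal.measurable_ofReal]
  congr 1
  ext x
  simp only [Pi.mul_apply, Pi.smul_apply, smul_eq_mul]
  rw [gammaPDF, gammaPDF, ENNReal.ofNNReal_toNNReal,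
    ← ENNReal.ofReal_mul (gammaPDFReal_nonneg ha (inv_pos.2 hb) x),
    ← ENNReal.ofReal_mul (by positivity)]
  congr 1
  unfold gammaPDFReal
  split_ifs with hx
  · rw [Real.Gamma_add_one ha.ne', Real.rpow_add_one (inv_pos.2 hb).ne', add_sub_cancel_right]
    have hG := (Real.Gamma_pos_of_pos ha).ne'
    have : x ^ a = x ^ (a - 1) * x := by
      rcases hx.eq_or_lt with rfl | hx
      · simp [ha.ne']
      · rw [← Real.rpow_add_one hx.ne', sub_add_cancel]
    rw [this]
    field_simp
  · simp

lemma gammaMeasure_ae_nonneg (a b : ℝ) : ∀ᵐ x ∂gammaMeasure a b, 0 ≤ x := by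
  rw [gammaMeasure, ae_withDensity_iff (measurable_gammaPDF _ _)]
  refine ae_of_all _ fun x hx => ?_
  by_contra hneg
  exact hx (gammaPDF_of_neg (not_le.1 hneg))

/-- Stein identity for a vector of independent Poisson counts. -/
lemma lintegral_pi_poissonMeasure_mul {ι : Type*} [Fintype ι] [DecidableEq ι] (l : ι → ℝ≥0)
    (i : ι) (f : (ι → ℕ) → ℝ≥0∞) :
    ∫⁻ x, (x i : ℝ≥0∞) * f x ∂(Measure.pi fun j => poissonMeasure (l j)) =
      l i * ∫⁻ x, f (x + Pi.single i 1) ∂(Measure.pi fun j => poissonMeasure (l j)) := by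
  have hmap : Measure.pi (Function.update (fun j => poissonMeasure (l j)) i
      ((poissonMeasure (l i)).map (· + 1))) =
      (Measure.pi fun j => poissonMeasure (l j)).map (fun x => x + Pi.single i 1) := by
    have (j : ι) : SigmaFinite ((poissonMeasure (l j)).map
        (fun m => m + (Pi.single i 1 : ι → ℕ) j)) :=
      have := Measure.isProbabilityMeasure_map (μ := poissonMeasure (l j))
        (f := fun m => m + (Pi.single i 1 : ι → ℕ) j) (by fun_prop)
      inferInstance
    have key := Measure.pi_map_pi (μ := fun j => poissonMeasure (l j))
      (f := fun j m => m + (Pi.single i 1 : ι → ℕ) j) (fun j => by fun_prop)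
    refine Eq.trans ?_ key.symm
    congr 1
    ext1 j
    by_cases hj : j = i
    · subst hj; simp
    · simp [hj]
  have := Measure.isProbabilityMeasure_map (μ := poissonMeasure (l i)) (f := (· + 1)) (by fun_prop)
  have hw := withDensity_pi_eval (fun j => poissonMeasure (l j)) i
    ((poissonMeasure (l i)).map (· + 1)) (h := fun m => (m : ℝ≥0∞)) (by fun_prop) (l i)
    (poissonMeasure_withDensity_cast (l i))
  have hmeas : Measurable f := measurable_of_countable f
  calc _ = ∫⁻ x, f x ∂(Measure.pi fun j => poissonMeasure (l j)).withDensity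
          (fun x => (x i : ℝ≥0∞)) :=
        (lintegral_withDensity_eq_lintegral_mul _ (by fun_prop) hmeas).symm
    _ = _ := by
      rw [hw, hmap, ENNReal.smul_def, lintegral_smul_measure, smul_eq_mul,
        lintegral_map hmeas (by fun_prop)]

section CreditRisk

variable {n k : ℕ} (S0 : ℝ) (r0 : Fin n → ℝ) (r : Fin k → Fin n → ℝ) (α β : Fin k → ℝ)

lemma measurable_crpR (i : Fin n) : Measurable fun s => crpR S0 r0 r s i := by
  unfold crpR; fun_prop

lemma measurable_lintegral_poisson {f : (Fin k → ℝ) × (Fin n → ℕ) → ℝ≥0∞} (hf : Measurable f) :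
    Measurable fun s => ∫⁻ x, f (s, x)
      ∂(Measure.pi fun i => poissonMeasure (crpR S0 r0 r s i).toNNReal) := by
  simp_rw [lintegral_countable', Measure.pi_singleton, poissonMeasure_singleton]
  refine Measurable.tsum fun x => ?_
  have := measurable_crpR S0 r0 r
  fun_prop

lemma measurable_crpKernel :
    Measurable fun s : Fin k → ℝ =>
      (Measure.pi fun i => poissonMeasure (crpR S0 r0 r s i).toNNReal).map fun x => (s, x) := by
  refine Measure.measurable_of_measurable_coe _ fun A hA => ?_
  convert measurable_lintegral_poisson S0 r0 r (measurable_one.indicator hA) using 2 with s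
  rw [Measure.map_apply (by fun_prop) hA, ← lintegral_indicator_one (hA.preimage (by fun_prop))]
  rfl

lemma lintegral_crpMeasure {f : (Fin k → ℝ) × (Fin n → ℕ) → ℝ≥0∞} (hf : Measurable f) :
    ∫⁻ y, f y ∂crpMeasure S0 r0 r α β =
      ∫⁻ s, ∫⁻ x, f (s, x) ∂(Measure.pi fun i => poissonMeasure (crpR S0 r0 r s i).toNNReal)
        ∂(Measure.pi fun j => gammaMeasure (α j) (β j)⁻¹) := by
  rw [crpMeasure, Measure.lintegral_bind (measurable_crpKernel S0 r0 r).aemeasurable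
    hf.aemeasurable]
  exact lintegral_congr fun s => lintegral_map hf (by fun_prop)

lemma isProbabilityMeasure_crpMeasure (hα : ∀ j, 0 < α j) (hβ : ∀ j, 0 < β j) :
    IsProbabilityMeasure (crpMeasure S0 r0 r α β) := by
  have (j : Fin k) : IsProbabilityMeasure (gammaMeasure (α j) (β j)⁻¹) :=
    isProbabilityMeasure_gammaMeasure (hα j) (inv_pos.2 (hβ j))
  constructor
  rw [← lintegral_one, lintegral_crpMeasure S0 r0 r α β measurable_const]
  simp

/-- Weighting the law of the Gamma factors by the `j`-th factor increases its shape parameter. -/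
lemma lintegral_gamma_mul (hα : ∀ j, 0 < α j) (hβ : ∀ j, 0 < β j) (j : Fin k)
    {g : (Fin k → ℝ) → ℝ≥0∞} (hg : Measurable g) :
    ∫⁻ s, ENNReal.ofReal (s j) * g s ∂(Measure.pi fun j => gammaMeasure (α j) (β j)⁻¹) =
      ENNReal.ofReal (α j * β j) * ∫⁻ s, g s
        ∂(Measure.pi fun j' => gammaMeasure (Function.update α j (α j + 1) j') (β j')⁻¹) := by
  have := isProbabilityMeasure_gammaMeasure (add_pos (hα j) one_pos) (inv_pos.2 (hβ j))
  have hw := withDensity_pi_eval (fun j => gammaMeasure (α j) (β j)⁻¹) j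
    (gammaMeasure (α j + 1) (β j)⁻¹) ENNReal.measurable_ofReal _
    (gammaMeasure_withDensity_ofReal (hα j) (hβ j))
  have hupd : (fun j' => gammaMeasure (Function.update α j (α j + 1) j') (β j')⁻¹) =
      Function.update (fun j => gammaMeasure (α j) (β j)⁻¹) j
        (gammaMeasure (α j + 1) (β j)⁻¹) := by
    ext1 j'
    by_cases hj : j' = j
    · subst hj; simp
    · simp [hj]
  calc _ = ∫⁻ s, g s ∂(Measure.pi fun j => gammaMeasure (α j) (β j)⁻¹).withDensity
          (fun s => ENNReal.ofReal (s j)) :=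
        (lintegral_withDensity_eq_lintegral_mul _ (by fun_prop) hg).symm
    _ = _ := by
      rw [hw, hupd, ENNReal.smul_def, lintegral_smul_measure, smul_eq_mul,
        ENNReal.ofNNReal_toNNReal]

lemma measurable_crpLoss (ν : Fin n → ℕ) :
    Measurable (crpLoss ν : (Fin k → ℝ) × (Fin n → ℕ) → ℕ) := by
  unfold crpLoss; fun_prop

lemma measurableSet_le_crpLoss (ν : Fin n → ℕ) (q : ℕ) :
    MeasurableSet {y : (Fin k → ℝ) × (Fin n → ℕ) | q ≤ crpLoss ν y} :=
  measurableSet_le measurable_const (measurable_crpLoss ν)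

/-- The unnormalised tail contribution of obligor `i`, as a Lebesgue integral. -/
lemma setLIntegral_crpMeasure_count (ν : Fin n → ℕ) (hS0 : 0 ≤ S0) (hr0 : ∀ i, 0 ≤ r0 i)
    (hr : ∀ j i, 0 ≤ r j i) (hα : ∀ j, 0 < α j) (hβ : ∀ j, 0 < β j) (q : ℕ) (i : Fin n) :
    ∫⁻ y in {y | q ≤ crpLoss ν y}, (y.2 i : ℝ≥0∞) ∂crpMeasure S0 r0 r α β =
      ENNReal.ofReal (S0 * r0 i) * crpMeasure S0 r0 r α β {y | q - ν i ≤ crpLoss ν y} +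
      ∑ j, ENNReal.ofReal (α j * β j * r j i) *
        crpMeasure S0 r0 r (Function.update α j (α j + 1)) β {y | q - ν i ≤ crpLoss ν y} := by
  set T : Set ((Fin k → ℝ) × (Fin n → ℕ)) := {y | q - ν i ≤ crpLoss ν y} with hT
  have hTm : MeasurableSet T := measurableSet_le_crpLoss ν _
  have hA := measurableSet_le_crpLoss (k := k) ν q
  set g : (Fin k → ℝ) → ℝ≥0∞ := fun s => ∫⁻ x, T.indicator 1 (s, x)
      ∂(Measure.pi fun i => poissonMeasure (crpR S0 r0 r s i).toNNReal) with hg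
  have hgm : Measurable g := measurable_lintegral_poisson S0 r0 r (measurable_one.indicator hTm)
  have hgT (α' : Fin k → ℝ) : crpMeasure S0 r0 r α' β T =
      ∫⁻ s, g s ∂(Measure.pi fun j => gammaMeasure (α' j) (β j)⁻¹) := by
    rw [← lintegral_indicator_one hTm,
      lintegral_crpMeasure S0 r0 r α' β (measurable_one.indicator hTm)]
  have hcond (s : Fin k → ℝ) :
      ∫⁻ x, {y | q ≤ crpLoss ν y}.indicator
          (fun y : (Fin k → ℝ) × (Fin n → ℕ) => (y.2 i : ℝ≥0∞)) (s, x)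
        ∂(Measure.pi fun i => poissonMeasure (crpR S0 r0 r s i).toNNReal) =
      ENNReal.ofReal (crpR S0 r0 r s i) * g s := by
    rw [← ENNReal.ofNNReal_toNNReal, hg]
    have hshift (x : Fin n → ℕ) : T.indicator (1 : (Fin k → ℝ) × (Fin n → ℕ) → ℝ≥0∞) (s, x) =
        {y | q ≤ crpLoss ν y}.indicator 1 (s, x + Pi.single i 1) := by
      have hloss : crpLoss ν (s, x + Pi.single i 1) = crpLoss ν (s, x) + ν i := by
        simp [crpLoss, mul_add, Finset.sum_add_distrib, Pi.single_apply]
      simp only [Set.indicator_apply, hT, Set.mem_ofPred_eq, hloss, tsub_le_iff_right,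
        Pi.one_apply]
    simp_rw [hshift]
    rw [← lintegral_pi_poissonMeasure_mul (fun i => (crpR S0 r0 r s i).toNNReal) i
      (fun x => {y | q ≤ crpLoss ν y}.indicator (1 : (Fin k → ℝ) × (Fin n → ℕ) → ℝ≥0∞) (s, x))]
    refine lintegral_congr fun x => ?_
    simp [Set.indicator_apply]
  have hae : ∀ᵐ s ∂(Measure.pi fun j => gammaMeasure (α j) (β j)⁻¹), ∀ j, 0 ≤ s j :=
    ae_all_iff.2 fun j => Measure.tendsto_eval_ae_ae.eventually (gammaMeasure_ae_nonneg _ _)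
  rw [← lintegral_indicator hA,
    lintegral_crpMeasure S0 r0 r α β (Measurable.indicator (by fun_prop) hA)]
  simp_rw [hcond, hgT]
  calc _ = ∫⁻ s, (ENNReal.ofReal (S0 * r0 i) * g s +
          ∑ j, ENNReal.ofReal (r j i) * (ENNReal.ofReal (s j) * g s))
          ∂(Measure.pi fun j => gammaMeasure (α j) (β j)⁻¹) := by
        refine lintegral_congr_ae (hae.mono fun s hs => ?_)
        have hnn (j : Fin k) : 0 ≤ r j i * s j := mul_nonneg (hr j i) (hs j)
        simp only [crpR]
        rw [ENNReal.ofReal_add (mul_nonneg (hr0 i) hS0) (Finset.sum_nonneg fun j _ => hnn j),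
          ENNReal.ofReal_sum_of_nonneg fun j _ => hnn j, add_mul, Finset.sum_mul,
          mul_comm (r0 i)]
        simp_rw [ENNReal.ofReal_mul (hr _ i), mul_assoc]
    _ = _ := by
        rw [lintegral_add_left (by fun_prop), lintegral_const_mul _ hgm,
          lintegral_finsetSum _ (fun j _ => by fun_prop)]
        congr 1
        refine Finset.sum_congr rfl fun j _ => ?_
        rw [lintegral_const_mul _ (by fun_prop), lintegral_gamma_mul α β hα hβ j hgm,
          ← mul_assoc, ← ENNReal.ofReal_mul (hr j i), mul_comm (r j i)]

end CreditRisk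

/-- Corollary 3: the ES contribution satisfies
`E_α[N_i | L ≥ q_δ(L)] = (S₀ r_{0,i} P_α[L ≥ q−ν_i] + ∑_j α_j β_j r_{j,i} P_{α(j)}[L ≥ q−ν_i])
/ P_α[L ≥ q]` (with ℕ-truncated subtraction, `{L ≥ q − ν_i}` is everything when `q ≤ ν_i`). -/
theorem crp_es_contribution {n k : ℕ} (hn : 0 < n) (hk : 0 < k)
    (ν : Fin n → ℕ) (hν : ∀ i, 0 < ν i)
    (S0 : ℝ) (hS0 : 0 ≤ S0)
    (r0 : Fin n → ℝ) (r : Fin k → Fin n → ℝ)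
    (hr0 : ∀ i, 0 ≤ r0 i) (hr : ∀ j i, 0 ≤ r j i)
    (hr0sum : ∑ i, r0 i = 1) (hrsum : ∀ j, ∑ i, r j i = 1)
    (hrpos : ∀ i, 0 < ∑ j, r j i)
    (α β : Fin k → ℝ) (hα : ∀ j, 0 < α j) (hβ : ∀ j, 0 < β j)
    (δ : ℝ) (hδ : δ ∈ Set.Ioo (0 : ℝ) 1) (i : Fin n) :
    (∫ x in {y | crpVaR (crpMeasure S0 r0 r α β) ν δ ≤ crpLoss ν y},
        (x.2 i : ℝ) ∂(crpMeasure S0 r0 r α β)) /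
      ((crpMeasure S0 r0 r α β)
        {x | crpVaR (crpMeasure S0 r0 r α β) ν δ ≤ crpLoss ν x}).toReal
      = (S0 * r0 i *
          ((crpMeasure S0 r0 r α β)
            {x | crpVaR (crpMeasure S0 r0 r α β) ν δ - ν i ≤ crpLoss ν x}).toReal
         + ∑ j, α j * β j * r j i *
          ((crpMeasure S0 r0 r (Function.update α j (α j + 1)) β)
            {x | crpVaR (crpMeasure S0 r0 r α β) ν δ - ν i ≤ crpLoss ν x}).toReal) /
        ((crpMeasure S0 r0 r α β)
          {x | crpVaR (crpMeasure S0 r0 r α β) ν δ ≤ crpLoss ν x}).toReal := by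
  congr 1
  generalize crpVaR (crpMeasure S0 r0 r α β) ν δ = q
  have hprob (α' : Fin k → ℝ) (hα' : ∀ j, 0 < α' j) :=
    isProbabilityMeasure_crpMeasure S0 r0 r α' β hα' hβ
  have := hprob α hα
  have hupd (j : Fin k) := hprob (Function.update α j (α j + 1)) fun j' => by
    by_cases hj : j' = j
    · subst hj; simpa using add_pos (hα j') one_pos
    · simpa [hj] using hα j'
  have hmeas : Measurable fun y : (Fin k → ℝ) × (Fin n → ℕ) => (y.2 i : ℝ) := by fun_prop
  rw [integral_eq_lintegral_of_nonneg_ae (ae_of_all _ fun y => Nat.cast_nonneg _)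
    hmeas.aestronglyMeasurable]
  simp_rw [ENNReal.ofReal_natCast]
  rw [setLIntegral_crpMeasure_count S0 r0 r α β ν hS0 hr0 hr hα hβ q i,
    ENNReal.toReal_add (by finiteness) (ENNReal.sum_ne_top.2 fun j _ => by finiteness),
    ENNReal.toReal_sum (fun j _ => by finiteness),
    ENNReal.toReal_mul, ENNReal.toReal_ofReal (mul_nonneg hS0 (hr0 i))]
  congr 1
  refine Finset.sum_congr rfl fun j _ => ?_
  rw [ENNReal.toReal_mul,
    ENNReal.toReal_ofReal (mul_nonneg (mul_nonneg (hα j).le (hβ j).le) (hr j i))]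
end
end
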